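/- arXiv:1211.5344 — 3 statements merged into one kernel-verified Lean document; each statement's English description precedes it below -/
import Mathlib

section
/- Let t > 0 be a real number and let z = (z₁, z₂, z₃) ∈ ℂ³ be a nonzero point with z₁² + z₂² + z₃² = 0, and set w = F_t(z). Then |w|² = |z|² + t²/(4|z|²); equivalently |w| = √(|z|² + t²/(4|z|²)). -/
theorem normSq_add_real_mul_conj (c : ℝ) (z : ℂ) :
    Complex.normSq (z + (c : ℂ) * (starRingEnd ℂ) z) =
      Complex.normSq z * (1 + c ^ 2) + 2 * c * (z ^ 2).re := by
  simp [Complex.normSq_apply, pow_two]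
  ring

/-- For real `t > 0` and a nonzero point `z = (z₁, z₂, z₃)` on the nodal cone
`z₁² + z₂² + z₃² = 0`, the image point `w = F_t(z)`, with
`wᵢ = zᵢ + (t/(2|z|²))·conj(zᵢ)`, satisfies `|w|² = |z|² + t²/(4|z|²)`. -/
theorem normSq_image_eq (t : ℝ) (ht : 0 < t) (z₁ z₂ z₃ : ℂ)
    (hz : ¬(z₁ = 0 ∧ z₂ = 0 ∧ z₃ = 0))
    (hcone : z₁ ^ 2 + z₂ ^ 2 + z₃ ^ 2 = 0)
    (w₁ w₂ w₃ : ℂ)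
    (hw₁ : w₁ = z₁ + ((t : ℂ) / (2 * ((Complex.normSq z₁ + Complex.normSq z₂ +
      Complex.normSq z₃ : ℝ) : ℂ))) * (starRingEnd ℂ) z₁)
    (hw₂ : w₂ = z₂ + ((t : ℂ) / (2 * ((Complex.normSq z₁ + Complex.normSq z₂ +
      Complex.normSq z₃ : ℝ) : ℂ))) * (starRingEnd ℂ) z₂)
    (hw₃ : w₃ = z₃ + ((t : ℂ) / (2 * ((Complex.normSq z₁ + Complex.normSq z₂ +
      Complex.normSq z₃ : ℝ) : ℂ))) * (starRingEnd ℂ) z₃) :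
    Complex.normSq w₁ + Complex.normSq w₂ + Complex.normSq w₃ =
      (Complex.normSq z₁ + Complex.normSq z₂ + Complex.normSq z₃) +
        t ^ 2 / (4 * (Complex.normSq z₁ + Complex.normSq z₂ + Complex.normSq z₃)) := by
  have hre : (z₁ ^ 2).re + (z₂ ^ 2).re + (z₃ ^ 2).re = 0 := by
    have := congrArg Complex.re hcone
    simpa only [Complex.add_re, Complex.zero_re] using this
  set N : ℝ := Complex.normSq z₁ + Complex.normSq z₂ + Complex.normSq z₃ with hN
  have hN0 : N ≠ 0 := by
    intro h0
    have h1 := Complex.normSq_nonneg z₁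
    have h2 := Complex.normSq_nonneg z₂
    have h3 := Complex.normSq_nonneg z₃
    exact hz ⟨Complex.normSq_eq_zero.mp (by linarith), Complex.normSq_eq_zero.mp (by linarith),
      Complex.normSq_eq_zero.mp (by linarith)⟩
  have hc : (t : ℂ) / (2 * (N : ℂ)) = ((t / (2 * N) : ℝ) : ℂ) := by push_cast; rfl
  rw [hc] at hw₁ hw₂ hw₃
  rw [hw₁, hw₂, hw₃, normSq_add_real_mul_conj, normSq_add_real_mul_conj,
    normSq_add_real_mul_conj]
  have key : N * (t / (2 * N)) ^ 2 = t ^ 2 / (4 * N) := by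
    field_simp
    norm_num
  rw [← key]
  linear_combination (2 * (t / (2 * N))) * hre - (1 + (t / (2 * N)) ^ 2) * hN
end

section
/- Let t > 0 be a real number. The map F_t, defined by F_t(z)ᵢ = zᵢ + (t/(2|z|²))·conj(zᵢ), is a bijection from {z ∈ ℂ³ : z₁² + z₂² + z₃² = 0 and |z|² > t/2} onto {w ∈ ℂ³ : w₁² + w₂² + w₃² = t and |w|² > t}. -/
theorem coef_cast (t r : ℝ) : (t : ℂ) / (2 * (r : ℂ)) = ((t / (2 * r) : ℝ) : ℂ) := by
  push_cast; rfl

theorem comp_re (c : ℝ) (z : ℂ) : (z + (c : ℂ) * (starRingEnd ℂ) z).re = (1 + c) * z.re := by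
  simp; ring

theorem comp_im (c : ℝ) (z : ℂ) : (z + (c : ℂ) * (starRingEnd ℂ) z).im = (1 - c) * z.im := by
  simp; ring

theorem sumsq_iff (a b d : ℂ) (s : ℝ) : a ^ 2 + b ^ 2 + d ^ 2 = (s : ℂ) ↔
    (a.re ^ 2 + b.re ^ 2 + d.re ^ 2) - (a.im ^ 2 + b.im ^ 2 + d.im ^ 2) = s ∧
      a.re * a.im + b.re * b.im + d.re * d.im = 0 := by
  rw [Complex.ext_iff]
  simp only [pow_two, Complex.add_re, Complex.add_im, Complex.mul_re, Complex.mul_im,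
    Complex.ofReal_re, Complex.ofReal_im]
  constructor
  · rintro ⟨h1, h2⟩; constructor <;> linarith
  · rintro ⟨h1, h2⟩; constructor <;> linarith

theorem nsq_sum (a b d : ℂ) : Complex.normSq a + Complex.normSq b + Complex.normSq d =
    (a.re ^ 2 + b.re ^ 2 + d.re ^ 2) + (a.im ^ 2 + b.im ^ 2 + d.im ^ 2) := by
  simp only [Complex.normSq_apply]; ring

/-- Norm of the image. -/
theorem nsq_image (t : ℝ) (a b d : ℂ) (r : ℝ) (hr : 0 < r)
    (hz : a ^ 2 + b ^ 2 + d ^ 2 = 0)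
    (hn : Complex.normSq a + Complex.normSq b + Complex.normSq d = r) :
    Complex.normSq (a + ((t / (2 * r) : ℝ) : ℂ) * (starRingEnd ℂ) a) +
    Complex.normSq (b + ((t / (2 * r) : ℝ) : ℂ) * (starRingEnd ℂ) b) +
    Complex.normSq (d + ((t / (2 * r) : ℝ) : ℂ) * (starRingEnd ℂ) d) = r + t ^ 2 / (4 * r) := by
  rw [nsq_sum] at hn ⊢
  have hz' := (sumsq_iff a b d 0).1 (by simpa using hz)
  simp only [comp_re, comp_im]
  have hA : a.re ^ 2 + b.re ^ 2 + d.re ^ 2 = r / 2 := by linarith [hz'.1]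
  have hB : a.im ^ 2 + b.im ^ 2 + d.im ^ 2 = r / 2 := by linarith [hz'.1]
  have : r + t ^ 2 / (4 * r) = (1 + t / (2 * r)) ^ 2 * (r / 2) + (1 - t / (2 * r)) ^ 2 * (r / 2) := by
    field_simp; ring
  rw [this]
  linear_combination (1 + t / (2 * r)) ^ 2 * hA + (1 - t / (2 * r)) ^ 2 * hB

theorem comp_inj (c : ℝ) (h0 : 0 < c) (h1 : c < 1) (a b : ℂ)
    (h : a + (c : ℂ) * (starRingEnd ℂ) a = b + (c : ℂ) * (starRingEnd ℂ) b) : a = b := by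
  have hr := congrArg Complex.re h
  have hi := congrArg Complex.im h
  rw [comp_re, comp_re] at hr
  rw [comp_im, comp_im] at hi
  apply Complex.ext
  · exact mul_left_cancel₀ (by linarith) hr
  · exact mul_left_cancel₀ (by linarith) hi

/-- For real `t > 0`, the map `F_t(z)ᵢ = zᵢ + (t/(2|z|²))·conj(zᵢ)` is a bijection from
`{z ∈ ℂ³ : z₁² + z₂² + z₃² = 0, |z|² > t/2}` onto `{w ∈ ℂ³ : w₁² + w₂² + w₃² = t, |w|² > t}`. -/
theorem F_t_bijective (t : ℝ) (ht : 0 < t) :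
    Set.BijOn
      (fun z : ℂ × ℂ × ℂ =>
        (z.1 + ((t : ℂ) / (2 * ((Complex.normSq z.1 + Complex.normSq z.2.1 +
            Complex.normSq z.2.2 : ℝ) : ℂ))) * (starRingEnd ℂ) z.1,
         z.2.1 + ((t : ℂ) / (2 * ((Complex.normSq z.1 + Complex.normSq z.2.1 +
            Complex.normSq z.2.2 : ℝ) : ℂ))) * (starRingEnd ℂ) z.2.1,
         z.2.2 + ((t : ℂ) / (2 * ((Complex.normSq z.1 + Complex.normSq z.2.1 +
            Complex.normSq z.2.2 : ℝ) : ℂ))) * (starRingEnd ℂ) z.2.2))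
      {z : ℂ × ℂ × ℂ | z.1 ^ 2 + z.2.1 ^ 2 + z.2.2 ^ 2 = 0 ∧
        t / 2 < Complex.normSq z.1 + Complex.normSq z.2.1 + Complex.normSq z.2.2}
      {w : ℂ × ℂ × ℂ | w.1 ^ 2 + w.2.1 ^ 2 + w.2.2 ^ 2 = (t : ℂ) ∧
        t < Complex.normSq w.1 + Complex.normSq w.2.1 + Complex.normSq w.2.2} := by
  have hc : ∀ r : ℝ, t / 2 < r → 0 < t / (2 * r) ∧ t / (2 * r) < 1 := by
    intro r hr
    have : 0 < r := by linarith
    refine ⟨by positivity, ?_⟩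
    rw [div_lt_one (by positivity)]; linarith
  simp only [coef_cast]
  refine ⟨?_, ?_, ?_⟩
  · rintro ⟨a, b, d⟩ ⟨hz, hn⟩
    simp only [Set.mem_setOf_eq] at hz hn ⊢
    obtain ⟨r, hr⟩ : ∃ r, r = Complex.normSq a + Complex.normSq b + Complex.normSq d := ⟨_, rfl⟩
    rw [← hr] at hn ⊢
    have hr0 : 0 < r := by linarith
    rw [nsq_image t a b d r hr0 hz hr.symm]
    constructor
    · have hz' := (sumsq_iff a b d 0).1 (by simpa using hz)
      rw [nsq_sum] at hr
      have hA : a.re ^ 2 + b.re ^ 2 + d.re ^ 2 = r / 2 := by linarith [hz'.1]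
      have hB : a.im ^ 2 + b.im ^ 2 + d.im ^ 2 = r / 2 := by linarith [hz'.1]
      rw [sumsq_iff]
      simp only [comp_re, comp_im]
      constructor
      · have h : (1 + t / (2 * r)) ^ 2 * (r / 2) - (1 - t / (2 * r)) ^ 2 * (r / 2) = t := by
          field_simp; ring
        linear_combination h + (1 + t / (2 * r)) ^ 2 * hA - (1 - t / (2 * r)) ^ 2 * hB
      · linear_combination (1 + t / (2 * r)) * (1 - t / (2 * r)) * hz'.2
    · have h : r + t ^ 2 / (4 * r) - t = (r - t / 2) ^ 2 / r := by
        field_simp; ring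
      have : 0 < (r - t / 2) ^ 2 / r := div_pos (pow_pos (by linarith) 2) hr0
      linarith
  · rintro ⟨a, b, d⟩ ⟨hz, hn⟩ ⟨a', b', d'⟩ ⟨hz', hn'⟩ he
    simp only [Set.mem_setOf_eq] at hz hn hz' hn' he
    obtain ⟨r, hr⟩ : ∃ r, r = Complex.normSq a + Complex.normSq b + Complex.normSq d := ⟨_, rfl⟩
    obtain ⟨r', hr'⟩ : ∃ r, r = Complex.normSq a' + Complex.normSq b' + Complex.normSq d' :=
      ⟨_, rfl⟩
    rw [← hr] at hn he
    rw [← hr'] at hn' he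
    have h1 := nsq_image t a b d r (by linarith) hz hr.symm
    have h2 := nsq_image t a' b' d' r' (by linarith) hz' hr'.symm
    simp only [Prod.mk.injEq] at he
    obtain ⟨e1, e2, e3⟩ := he
    rw [e1, e2, e3, h2] at h1
    have hr0 : 0 < r := by linarith
    have hr0' : 0 < r' := by linarith
    have hrr : r = r' := by
      have h3 : (r' - r) * (4 * r * r' - t ^ 2) = 0 := by
        field_simp at h1
        linear_combination h1
      have h4 : 4 * r * r' - t ^ 2 ≠ 0 := by nlinarith
      have := (mul_eq_zero.1 h3).resolve_right h4
      linarith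
    rw [← hrr] at e1 e2 e3
    obtain ⟨c0, c1⟩ := hc r hn
    rw [comp_inj _ c0 c1 _ _ e1, comp_inj _ c0 c1 _ _ e2, comp_inj _ c0 c1 _ _ e3]
  · rintro ⟨a, b, d⟩ ⟨hw, hn⟩
    simp only [Set.mem_setOf_eq] at hw hn
    obtain ⟨R, hR⟩ : ∃ R, R = Complex.normSq a + Complex.normSq b + Complex.normSq d := ⟨_, rfl⟩
    rw [← hR] at hn
    obtain ⟨r, hr, hrR⟩ : ∃ r, t / 2 < r ∧ r + t ^ 2 / (4 * r) = R := by
      have hs := Real.sq_sqrt (show 0 ≤ R ^ 2 - t ^ 2 by nlinarith)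
      have hs0 := Real.sqrt_nonneg (R ^ 2 - t ^ 2)
      have hp : 0 < (R + √(R ^ 2 - t ^ 2)) := by linarith
      refine ⟨(R + √(R ^ 2 - t ^ 2)) / 2, by linarith, ?_⟩
      field_simp
      linear_combination 4 * hs
    obtain ⟨c0, c1⟩ := hc r hr
    have hr0 : 0 < r := by linarith
    obtain ⟨w1, w2⟩ := (sumsq_iff a b d t).1 hw
    rw [nsq_sum] at hR
    obtain ⟨c, hcd⟩ : ∃ c, c = t / (2 * r) := ⟨_, rfl⟩
    have ht2 : t = 2 * r * c := by rw [hcd]; field_simp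
    have hR2 : R = r * (1 + c ^ 2) := by rw [hcd, ← hrR]; field_simp; ring
    rw [← hcd] at c0 c1
    have hp : (1 + c) ≠ 0 := by linarith
    have hm : (1 - c) ≠ 0 := by linarith
    have hA : a.re ^ 2 + b.re ^ 2 + d.re ^ 2 = (1 + c) ^ 2 * (r / 2) := by
      linear_combination (1 / 2) * w1 - (1 / 2) * hR + (1 / 2) * ht2 + (1 / 2) * hR2
    have hB : a.im ^ 2 + b.im ^ 2 + d.im ^ 2 = (1 - c) ^ 2 * (r / 2) := by
      linear_combination -(1 / 2) * w1 - (1 / 2) * hR - (1 / 2) * ht2 + (1 / 2) * hR2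
    have hA' : (a.re / (1 + c)) ^ 2 + (b.re / (1 + c)) ^ 2 + (d.re / (1 + c)) ^ 2 = r / 2 := by
      rw [div_pow, div_pow, div_pow, ← add_div, ← add_div, hA]; field_simp
    have hB' : (a.im / (1 - c)) ^ 2 + (b.im / (1 - c)) ^ 2 + (d.im / (1 - c)) ^ 2 = r / 2 := by
      rw [div_pow, div_pow, div_pow, ← add_div, ← add_div, hB]; field_simp
    have hN : Complex.normSq ⟨a.re / (1 + c), a.im / (1 - c)⟩ +
        Complex.normSq ⟨b.re / (1 + c), b.im / (1 - c)⟩ +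
        Complex.normSq ⟨d.re / (1 + c), d.im / (1 - c)⟩ = r := by
      rw [nsq_sum]; linear_combination hA' + hB'
    have hcomp : ∀ u : ℂ, (⟨u.re / (1 + c), u.im / (1 - c)⟩ : ℂ) +
        (c : ℂ) * (starRingEnd ℂ) ⟨u.re / (1 + c), u.im / (1 - c)⟩ = u := by
      intro u
      apply Complex.ext
      · rw [comp_re]; exact mul_div_cancel₀ _ hp
      · rw [comp_im]; exact mul_div_cancel₀ _ hm
    refine ⟨(⟨a.re / (1 + c), a.im / (1 - c)⟩, ⟨b.re / (1 + c), b.im / (1 - c)⟩,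
      ⟨d.re / (1 + c), d.im / (1 - c)⟩), ⟨?_, ?_⟩, ?_⟩
    · have := (sumsq_iff ⟨a.re / (1 + c), a.im / (1 - c)⟩ ⟨b.re / (1 + c), b.im / (1 - c)⟩
        ⟨d.re / (1 + c), d.im / (1 - c)⟩ 0).2 ⟨by linear_combination hA' - hB', by
          have : ∀ x y : ℝ, x / (1 + c) * (y / (1 - c)) = x * y / ((1 + c) * (1 - c)) := by
            intro x y; rw [div_mul_div_comm]
          simp only [this]
          rw [← add_div, ← add_div, w2, zero_div]⟩
      simpa using this
    · simp only [hN]; exact hr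
    · simp only [hN, ← hcd, hcomp]
end

section
/- Let X and Y be real Banach spaces, let E : X → Y be a map, let D : X → Y be a continuous linear equivalence (bounded invertible linear map), and define R(x) := E(x) − E(0) − D(x). Let C, L, r₀ > 0 be constants such that: (i) ‖R(x) − R(y)‖ ≤ L·‖x − y‖·(‖x‖ + ‖y‖) for all x, y in the closed ball of radius r₀ about 0 in X; (ii) the inverse of D has operator norm at most C. If r is a real number with 0 < r < min(r₀, 1/(2LC)) and ‖E(0)‖ ≤ r/(2C), then there exists a unique x ∈ X with ‖x‖ ≤ r and E(x) = 0. -/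
/-- Quantitative implicit function theorem between Banach spaces: if `E : X → Y` has
invertible linearization `D` at `0` (with `‖D⁻¹‖ ≤ C`), the nonlinearities
`R(x) = E(x) − E(0) − D(x)` satisfy a quadratic estimate on the ball of radius `r₀`,
and for some `r < min(r₀, 1/(2LC))` the initial error satisfies `‖E(0)‖ ≤ r/(2C)`,
then `E(x) = 0` has a unique solution with `‖x‖ ≤ r`. -/
theorem quantitative_implicit_function_theorem
    {X Y : Type*} [NormedAddCommGroup X] [NormedSpace ℝ X] [CompleteSpace X]
    [NormedAddCommGroup Y] [NormedSpace ℝ Y] [CompleteSpace Y]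
    (E : X → Y) (D : X ≃L[ℝ] Y)
    (R : X → Y) (hR : ∀ x, R x = E x - E 0 - D x)
    (C L r₀ : ℝ) (hC : 0 < C) (hL : 0 < L) (hr₀ : 0 < r₀)
    (hRlip : ∀ x y : X, ‖x‖ ≤ r₀ → ‖y‖ ≤ r₀ →
      ‖R x - R y‖ ≤ L * ‖x - y‖ * (‖x‖ + ‖y‖))
    (hDinv : ‖(D.symm : Y →L[ℝ] X)‖ ≤ C)
    (r : ℝ) (hr : 0 < r) (hrmin : r < min r₀ (1 / (2 * L * C)))
    (hE0 : ‖E 0‖ ≤ r / (2 * C)) :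
    ∃! x : X, ‖x‖ ≤ r ∧ E x = 0 := by
  have hr0 : r < r₀ := lt_of_lt_of_le hrmin (min_le_left _ _)
  have hr1 : r < 1 / (2 * L * C) := lt_of_lt_of_le hrmin (min_le_right _ _)
  have hk1 : 2 * L * C * r < 1 := by
    rw [lt_div_iff₀ (by positivity)] at hr1
    linarith
  have hk0 : 0 ≤ 2 * L * C * r := by positivity
  have hDn : ∀ y : Y, ‖D.symm y‖ ≤ C * ‖y‖ := fun y =>
    (D.symm : Y →L[ℝ] X).le_of_opNorm_le hDinv y
  let T : X → X := fun x => -D.symm (E 0 + R x)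
  have hT : ∀ x, T x = x - D.symm (E x) := by
    intro x
    have h : E 0 + R x = E x - D x := by rw [hR]; abel
    simp only [T, h, map_sub, ContinuousLinearEquiv.symm_apply_apply]
    abel
  have hfix : ∀ x, T x = x ↔ E x = 0 := by
    intro x
    rw [hT, sub_eq_self]
    simp
  have hlip : ∀ x y, ‖x‖ ≤ r → ‖y‖ ≤ r → ‖T x - T y‖ ≤ 2 * L * C * r * ‖x - y‖ := by
    intro x y hx hy
    have h : T x - T y = -D.symm (R x - R y) := by
      simp only [T, map_add, map_sub]
      abel
    rw [h, norm_neg]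
    calc ‖D.symm (R x - R y)‖ ≤ C * ‖R x - R y‖ := hDn _
      _ ≤ C * (L * ‖x - y‖ * (‖x‖ + ‖y‖)) := by
        gcongr
        exact hRlip x y (by linarith) (by linarith)
      _ ≤ C * (L * ‖x - y‖ * (r + r)) := by gcongr
      _ = _ := by ring
  have hmaps : Set.MapsTo T (Metric.closedBall 0 r) (Metric.closedBall 0 r) := by
    intro x hx
    rw [mem_closedBall_zero_iff] at hx ⊢
    have hR0 : R 0 = 0 := by rw [hR]; simp
    have h1 : ‖R x‖ ≤ L * ‖x‖ * ‖x‖ := by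
      have := hRlip x 0 (by linarith) (by simpa using hr₀.le)
      simpa [hR0] using this
    have h2 : ‖R x‖ ≤ L * r * r := h1.trans (by gcongr)
    calc ‖T x‖ = ‖D.symm (E 0 + R x)‖ := norm_neg _
      _ ≤ C * ‖E 0 + R x‖ := hDn _
      _ ≤ C * (r / (2 * C) + L * r * r) := by
        gcongr
        exact (norm_add_le _ _).trans (add_le_add hE0 h2)
      _ = r / 2 + (2 * L * C * r) * r / 2 := by field_simp
      _ ≤ r := by nlinarith
  have hcon : ContractingWith ⟨2 * L * C * r, hk0⟩ (hmaps.restrict T _ _) := by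
    refine ⟨by exact_mod_cast hk1, LipschitzWith.of_dist_le_mul ?_⟩
    rintro ⟨x, hx⟩ ⟨y, hy⟩
    rw [mem_closedBall_zero_iff] at hx hy
    have h := hlip x y hx hy
    rw [← dist_eq_norm, ← dist_eq_norm] at h
    exact h
  obtain ⟨x, hx, hxf, -⟩ := hcon.exists_fixedPoint' Metric.isClosed_closedBall.isComplete hmaps
    (Metric.mem_closedBall_self hr.le) (edist_ne_top _ _)
  rw [mem_closedBall_zero_iff] at hx
  refine ⟨x, ⟨hx, (hfix x).1 hxf⟩, ?_⟩
  rintro y ⟨hy, hyE⟩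
  have h := hlip y x hy hx
  rw [(hfix y).2 hyE, show T x = x from hxf] at h
  have h0 : ‖y - x‖ = 0 := by nlinarith [norm_nonneg (y - x)]
  exact sub_eq_zero.1 (norm_eq_zero.1 h0)
end
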